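/- Let f be a homeomorphism of a locally compact, σ-compact Hausdorff space X. Then there exist a compact Hausdorff space X̂, a topological embedding j : X → X̂ with j(X) open and dense in X̂, and a homeomorphism f̂ of X̂, such that: f̂ ∘ j = j ∘ f; every point of X̂ ∖ j(X) is a fixed point of f̂; and for all x, y ∈ X, (j x, j y) ∈ 𝒢(graph f̂) if and only if (x,y) ∈ 𝒢(graph f). Moreover, if X is metrizable then X̂ can be chosen to be metrizable. -/

import Mathlib

/-- The image of a set `A` under a relation `f ⊆ X × Y`. -/
def relImage {X Y : Type*} (f : Set (X × Y)) (A : Set X) : Set Y :=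
  {y | ∃ x ∈ A, (x, y) ∈ f}

/-- The reverse (inverse) relation of `f ⊆ X × Y`. -/
def relInv {X Y : Type*} (f : Set (X × Y)) : Set (Y × X) :=
  {p | (p.2, p.1) ∈ f}

/-- Composition of relations: `relComp g f = g ∘ f` (first `f`, then `g`). -/
def relComp {X Y Z : Type*} (g : Set (Y × Z)) (f : Set (X × Y)) : Set (X × Z) :=
  {p | ∃ y, (p.1, y) ∈ f ∧ (y, p.2) ∈ g}

/-- A relation on `X` is transitive. -/
def RelTrans {X : Type*} (f : Set (X × X)) : Prop :=
  ∀ x y z : X, (x, y) ∈ f → (y, z) ∈ f → (x, z) ∈ f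

/-- `gRel f` is the smallest closed transitive relation containing `f`:
the intersection of all closed transitive relations containing `f`. -/
def gRel {X : Type*} [TopologicalSpace X] (f : Set (X × X)) : Set (X × X) :=
  ⋂₀ {g : Set (X × X) | f ⊆ g ∧ IsClosed g ∧ RelTrans g}

/-- `(Xh, j, fh)` is a proper compactification of the reversible cascade `(X, f)` by a
homeomorphism `fh` extending `f`, fixing every point at infinity, and introducing no
new generalized recurrence: `(j x, j y) ∈ 𝒢(graph fh) ↔ (x,y) ∈ 𝒢(graph f)`. -/
def IsStoppedCascadeCompactification {X : Type u} [TopologicalSpace X] (f : X → X)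
    (Xh : Type u) [TopologicalSpace Xh] (j : X → Xh) (fh : Xh → Xh) : Prop :=
  CompactSpace Xh ∧ T2Space Xh ∧ Topology.IsEmbedding j ∧
    IsOpen (Set.range j) ∧ Dense (Set.range j) ∧
    IsHomeomorph fh ∧
    (∀ x : X, fh (j x) = j (f x)) ∧
    (∀ z : Xh, z ∉ Set.range j → fh z = z) ∧
    (∀ x y : X,
      (j x, j y) ∈ gRel {p : Xh × Xh | p.2 = fh p.1} ↔
        (x, y) ∈ gRel {p : X × X | p.2 = f p.1})

/-!
The compactification is the closure of the image of `X` in a cube `S → [0,1]`, for a family `S` of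
continuous functions `h` with `h ∘ f - h → 0` at infinity: this condition is exactly what makes the
extension of `f` by the identity continuous. The points of `𝒢 f` are then detected on the closure
if `S` contains, for each `(x, y) ∉ 𝒢 f`, a Lyapunov function `M ≤ M ∘ f` with `M y < M (f x)`.

A Lyapunov function `L` separating the two points comes from the Urysohn lemma for the closed
preorder generated by `𝒢 f`. To make its increments vanish at infinity, replace it by the value
`M x = ⨅ k, L (f⁻ᵏ x) + ∑ i ∈ [1, k], ε (f⁻ⁱ x)`, which grows by at most `ε` along `f`. Here `ε`
vanishes at infinity, but so slowly that the sums diverge locally uniformly along backward orbits;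
hence the infimum is locally a finite one, and `M` is continuous.
-/

open Set Filter Function Topology TopologicalSpace Uniformity unitInterval

section Order

variable {X : Type*} [TopologicalSpace X]

theorem isOpen_iUnion_of_inter_compactCovering_subset [SigmaCompactSpace X]
    {C : ℕ → Set X} (hC : Monotone C)
    (hK : ∀ n, C n ∩ compactCovering X n ⊆ interior (C (n + 1))) : IsOpen (⋃ n, C n) := by
  refine isOpen_iff_mem_nhds.mpr fun x hx => ?_
  obtain ⟨n, hn⟩ := mem_iUnion.mp hx
  obtain ⟨m, hm⟩ := exists_mem_compactCovering x
  have hint : x ∈ interior (C (max n m + 1)) :=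
    hK _ ⟨hC (le_max_left n m) hn, compactCovering_subset X (le_max_right n m) hm⟩
  exact mem_of_superset (mem_interior_iff_mem_nhds.mp hint) (subset_iUnion C _)

variable [Preorder X]

theorem monotone_urysohn_approx {P : Set X → Set X → Prop} (hP : ∀ C U, P C U → IsLowerSet U)
    (n : ℕ) (c : Urysohns.CU P) : Monotone (c.approx n) := by
  induction n generalizing c with
  | zero =>
    intro x y hxy
    by_cases hy : y ∈ c.U
    · simp [Urysohns.CU.approx, hy, hP _ _ c.P_C_U hxy hy]
    · exact (c.approx_le_one 0 x).trans_eq (c.approx_of_notMem_U 0 hy).symm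
  | succ n ih => exact fun x y hxy => midpoint_le_midpoint (ih _ hxy) (ih _ hxy)

/-- A closed lower set and a closed upper set that are disjoint: the data to be separated in the
order version of normality. -/
structure OrderSeparatedPair (X : Type*) [TopologicalSpace X] [Preorder X] where
  lower : Set X
  upper : Set X
  isClosed_lower : IsClosed lower
  isLowerSet : IsLowerSet lower
  isClosed_upper : IsClosed upper
  isUpperSet : IsUpperSet upper
  disjoint : Disjoint lower upper

variable [OrderClosedTopology X]

theorem isClosed_lowerClosure_of_isCompact {K : Set X} (hK : IsCompact K) :
    IsClosed (lowerClosure K : Set X) := by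
  have : CompactSpace K := isCompact_iff_compactSpace.mp hK
  have hle : IsClosed {p : X × K | p.1 ≤ p.2} :=
    isClosed_le continuous_fst (continuous_subtype_val.comp continuous_snd)
  convert! isClosedMap_fst_of_compactSpace _ hle using 1
  ext x
  simp

theorem exists_isClosed_isLowerSet_between [LocallyCompactSpace X] {C U K : Set X}
    (hC : IsClosed C) (hCl : IsLowerSet C) (hU : IsOpen U) (hUl : IsLowerSet U) (hCU : C ⊆ U)
    (hK : IsCompact K) :
    ∃ D, IsClosed D ∧ IsLowerSet D ∧ C ⊆ D ∧ D ⊆ U ∧ C ∩ K ⊆ interior D := by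
  obtain ⟨N, hN, hCN, hNU⟩ :=
    exists_compact_between (hK.inter_left hC) hU (inter_subset_left.trans hCU)
  refine ⟨C ∪ lowerClosure N, hC.union (isClosed_lowerClosure_of_isCompact hN),
    hCl.union (lowerClosure N).lower, subset_union_left,
    union_subset hCU (lowerClosure_min hNU hUl), hCN.trans (interior_mono ?_)⟩
  exact subset_lowerClosure.trans subset_union_right

namespace OrderSeparatedPair

theorem exists_enlarge [LocallyCompactSpace X] (p : OrderSeparatedPair X) {K : Set X}
    (hK : IsCompact K) :
    ∃ q : OrderSeparatedPair X, p.lower ⊆ q.lower ∧ p.upper ⊆ q.upper ∧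
      p.lower ∩ K ⊆ interior q.lower ∧ p.upper ∩ K ⊆ interior q.upper := by
  obtain ⟨C, hC, hCl, hpC, hCp, hCK⟩ := exists_isClosed_isLowerSet_between p.isClosed_lower
    p.isLowerSet p.isClosed_upper.isOpen_compl p.isUpperSet.compl p.disjoint.subset_compl_right hK
  have : LocallyCompactSpace Xᵒᵈ := ‹LocallyCompactSpace X›
  obtain ⟨D, hD, hDu, hpD, hDC, hDK⟩ := exists_isClosed_isLowerSet_between (X := Xᵒᵈ)
    p.isClosed_upper p.isUpperSet hC.isOpen_compl hCl.compl (subset_compl_comm.mp hCp) hK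
  exact ⟨⟨C, D, hC, hCl, hD, hDu, (subset_compl_iff_disjoint_right.mp hDC).symm⟩,
    hpC, hpD, hCK, hDK⟩

/-- **Nachbin's normality theorem** for σ-compact spaces. -/
theorem exists_isOpen_separation [LocallyCompactSpace X] [SigmaCompactSpace X]
    (p : OrderSeparatedPair X) :
    ∃ V W, IsOpen V ∧ IsOpen W ∧ IsLowerSet V ∧ IsUpperSet W ∧ p.lower ⊆ V ∧ p.upper ⊆ W ∧
      Disjoint V W := by
  choose next hlower hupper hint_lower hint_upper using fun n (q : OrderSeparatedPair X) =>
    q.exists_enlarge (isCompact_compactCovering X n)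
  let s : ℕ → OrderSeparatedPair X := fun n => Nat.rec p next n
  have hmono_lower : Monotone fun n => (s n).lower :=
    monotone_nat_of_le_succ fun n => hlower n (s n)
  have hmono_upper : Monotone fun n => (s n).upper :=
    monotone_nat_of_le_succ fun n => hupper n (s n)
  refine ⟨⋃ n, (s n).lower, ⋃ n, (s n).upper,
    isOpen_iUnion_of_inter_compactCovering_subset hmono_lower fun n => hint_lower n (s n),
    isOpen_iUnion_of_inter_compactCovering_subset hmono_upper fun n => hint_upper n (s n),
    isLowerSet_iUnion fun n => (s n).isLowerSet, isUpperSet_iUnion fun n => (s n).isUpperSet,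
    subset_iUnion (fun n => (s n).lower) 0, subset_iUnion (fun n => (s n).upper) 0, ?_⟩
  simp only [disjoint_iUnion_left, disjoint_iUnion_right]
  intro m n
  exact (s (max m n)).disjoint.mono (hmono_lower (le_max_right _ _)) (hmono_upper (le_max_left _ _))

theorem exists_monotone_zero_one [LocallyCompactSpace X] [SigmaCompactSpace X]
    (p : OrderSeparatedPair X) :
    ∃ L : C(X, I), Monotone L ∧ EqOn L 0 p.lower ∧ EqOn L 1 p.upper := by
  let P (C U : Set X) : Prop :=
    IsLowerSet U ∧ ∃ F, IsClosed F ∧ IsLowerSet F ∧ C ⊆ F ∧ F ⊆ U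
  let c : Urysohns.CU P :=
    { C := p.lower
      U := p.upperᶜ
      P_C_U := ⟨p.isUpperSet.compl, p.lower, p.isClosed_lower, p.isLowerSet, Subset.rfl,
        p.disjoint.subset_compl_right⟩
      closed_C := p.isClosed_lower
      open_U := p.isClosed_upper.isOpen_compl
      subset := p.disjoint.subset_compl_right
      hP := by
        rintro C U - ⟨hUl, F, hF, hFl, hCF, hFU⟩ hU -
        obtain ⟨V, W, hV, hW, hVl, hWu, hFV, hUW, hVW⟩ := exists_isOpen_separation
          ⟨F, Uᶜ, hF, hFl, hU.isClosed_compl, hUl.compl, disjoint_compl_right_iff_subset.mpr hFU⟩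
        have hVW' : closure V ⊆ Wᶜ := closure_minimal hVW.subset_compl_right hW.isClosed_compl
        have hWU : Wᶜ ⊆ U := compl_subset_comm.mp hUW
        exact ⟨V, hV, hCF.trans hFV, hVW'.trans hWU, ⟨hVl, F, hF, hFl, hCF, hFV⟩,
          hUl, Wᶜ, hW.isClosed_compl, hWu.compl, hVW', hWU⟩ }
  refine ⟨⟨fun x => ⟨c.lim x, c.lim_nonneg x, c.lim_le_one x⟩,
    c.continuous_lim.subtype_mk _⟩, fun x y hxy => ?_, fun x hx => Subtype.ext ?_,
    fun x hx => Subtype.ext ?_⟩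
  · change c.lim x ≤ c.lim y
    exact le_of_tendsto_of_tendsto' (c.tendsto_approx_atTop x) (c.tendsto_approx_atTop y)
      fun n => monotone_urysohn_approx (fun _ _ h => h.1) n c hxy
  · exact c.lim_of_mem_C x hx
  · exact c.lim_of_notMem_U x (not_not_intro hx)

end OrderSeparatedPair

end Order

section GRel

variable {X Y : Type*} [TopologicalSpace X] [TopologicalSpace Y]

theorem subset_gRel (R : Set (X × X)) : R ⊆ gRel R :=
  subset_sInter fun _ h => h.1

theorem isClosed_gRel (R : Set (X × X)) : IsClosed (gRel R) :=
  isClosed_sInter fun _ h => h.2.1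

theorem relTrans_gRel (R : Set (X × X)) : RelTrans (gRel R) :=
  fun x y z hxy hyz T hT => hT.2.2 x y z (hxy T hT) (hyz T hT)

theorem gRel_subset {R T : Set (X × X)} (hRT : R ⊆ T) (hT : IsClosed T) (hT' : RelTrans T) :
    gRel R ⊆ T :=
  sInter_subset_of_mem ⟨hRT, hT, hT'⟩

theorem gRel_subset_preimage_gRel {R : Set (X × X)} {T : Set (Y × Y)} {j : X → Y}
    (hj : Continuous j) (hRT : R ⊆ Prod.map j j ⁻¹' T) : gRel R ⊆ Prod.map j j ⁻¹' gRel T :=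
  gRel_subset (hRT.trans (preimage_mono (subset_gRel T)))
    ((isClosed_gRel T).preimage (hj.prodMap hj)) fun _ _ _ hxy hyz => relTrans_gRel T _ _ _ hxy hyz

theorem le_of_mem_gRel_graph {α : Type*} [TopologicalSpace α] [Preorder α] [OrderClosedTopology α]
    {f : X → X} (hf : Continuous f) {L : X → α} (hL : Continuous L) (hLf : ∀ z, L z ≤ L (f z))
    {x y : X} (hxy : (x, y) ∈ gRel {p : X × X | p.2 = f p.1}) : L (f x) ≤ L y := by
  refine gRel_subset (T := {p : X × X | L (f p.1) ≤ L p.2}) (fun p hp => ?_)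
    (isClosed_le (by fun_prop) (by fun_prop)) (fun a b c hab hbc => ?_) hxy
  · exact (congrArg L hp).ge
  · exact hab.trans ((hLf b).trans hbc)

/-- The reflexive closure of `gRel R`, as a preorder. -/
@[reducible]
def gRelPreorder (R : Set (X × X)) : Preorder X where
  le x y := x = y ∨ (x, y) ∈ gRel R
  le_refl _ := Or.inl rfl
  le_trans := by
    rintro x y z (rfl | hxy) (rfl | hyz)
    · exact Or.inl rfl
    · exact Or.inr hyz
    · exact Or.inr hxy
    · exact Or.inr (relTrans_gRel R x y z hxy hyz)

theorem orderClosedTopology_gRelPreorder [T2Space X] (R : Set (X × X)) :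
    @OrderClosedTopology X _ (gRelPreorder R) :=
  letI := gRelPreorder R
  ⟨isClosed_diagonal.union (isClosed_gRel R)⟩

theorem exists_lyapunov_of_notMem_gRel [LocallyCompactSpace X] [SigmaCompactSpace X] [T2Space X]
    {f : X → X} {x y : X} (hxy : (x, y) ∉ gRel {p : X × X | p.2 = f p.1}) :
    ∃ L : C(X, I), (∀ z, L z ≤ L (f z)) ∧ L y = 0 ∧ L (f x) = 1 := by
  let R := {p : X × X | p.2 = f p.1}
  let := gRelPreorder R
  have := orderClosedTopology_gRelPreorder R
  have hstep (z : X) : (z, f z) ∈ gRel R := subset_gRel R rfl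
  have hle : ¬ f x ≤ y := by
    rintro (rfl | h)
    · exact hxy (hstep x)
    · exact hxy (relTrans_gRel R x (f x) y (hstep x) h)
  obtain ⟨L, hL, hL0, hL1⟩ := OrderSeparatedPair.exists_monotone_zero_one
    { lower := Iic y, upper := Ici (f x), isClosed_lower := isClosed_Iic,
      isLowerSet := isLowerSet_Iic y, isClosed_upper := isClosed_Ici,
      isUpperSet := isUpperSet_Ici (f x),
      disjoint := disjoint_left.mpr fun z hzy hxz => hle (le_trans hxz hzy) }
  exact ⟨L, fun z => hL (Or.inr (hstep z)), hL0 (le_refl y), hL1 (le_refl (f x))⟩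

end GRel

section SlowGrowth

variable {X : Type*} [TopologicalSpace X]

theorem exists_compactExhaustion_mapsTo_succ [WeaklyLocallyCompactSpace X] [SigmaCompactSpace X]
    {g : X → X} (hg : Continuous g) :
    ∃ K : CompactExhaustion X, ∀ n, MapsTo g (K n) (K (n + 1)) := by
  let E : CompactExhaustion X := default
  choose φ hφ using fun n => E.exists_superset_of_isCompact ((E.isCompact n).image hg)
  let a (n : ℕ) : ℕ := (fun m => max (m + 1) (φ m))^[n] 0
  have ha (n : ℕ) : a (n + 1) = max (a n + 1) (φ (a n)) := iterate_succ_apply' _ _ _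
  have ha_mono : StrictMono a := strictMono_nat_of_lt_succ fun n =>
    (Nat.lt_succ_self _).trans_le ((le_max_left _ _).trans_eq (ha n).symm)
  refine ⟨⟨fun n => E (a n), fun n => E.isCompact _, fun n => ?_, ?_⟩, fun n => ?_⟩
  · exact E.subset_interior (ha_mono n.lt_succ_self)
  · exact eq_univ_of_univ_subset (E.iUnion_eq.ge.trans
      (iUnion_mono fun n => E.subset (ha_mono.le_apply)))
  · exact mapsTo_iff_image_subset.mpr
      ((hφ _).trans (E.subset ((le_max_right _ _).trans_eq (ha n).symm)))

theorem eventually_find_mem_Icc [T2Space X] (K : CompactExhaustion X) (x : X) :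
    ∀ᶠ y in 𝓝 x, K.find y ∈ Icc (K.find x) (K.find x + 1) := by
  have hupper : ∀ᶠ y in 𝓝 x, K.find y ≤ K.find x + 1 := by
    filter_upwards [mem_interior_iff_mem_nhds.mp (K.subset_interior_succ _ (K.mem_find x))]
      with y hy using K.mem_iff_find_le.mp hy
  have hlower : ∀ᶠ y in 𝓝 x, K.find x ≤ K.find y := by
    rcases Nat.eq_zero_or_eq_succ_pred (K.find x) with h | h
    · simp [h]
    have hx : x ∉ K (K.find x).pred := fun hx => by grind [K.mem_iff_find_le.mp hx]
    filter_upwards [(K.isCompact _).isClosed.isOpen_compl.mem_nhds hx] with y hy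
    rw [mem_compl_iff, K.mem_iff_find_le, not_le] at hy
    lia
  filter_upwards [hlower, hupper] with y hl hu using ⟨hl, hu⟩

theorem exists_continuousMap_mem_Icc_find [T2Space X] [ParacompactSpace X]
    (K : CompactExhaustion X) :
    ∃ ρ : C(X, ℝ), ∀ x, ρ x ∈ Icc (K.find x : ℝ) (K.find x + 1) := by
  refine exists_continuous_forall_mem_convex_of_local_const (fun _ => convex_Icc _ _) fun x =>
    ⟨K.find x + 1, ?_⟩
  filter_upwards [eventually_find_mem_Icc K x] with y ⟨hl, hu⟩
  exact ⟨mod_cast hu, by gcongr⟩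

theorem exists_tendsto_atTop_apply_le_add_two [LocallyCompactSpace X] [SigmaCompactSpace X]
    [T2Space X] {g : X → X} (hg : Continuous g) :
    ∃ ρ : C(X, ℝ), (∀ x, 0 < ρ x) ∧ (∀ x, ρ (g x) ≤ ρ x + 2) ∧
      Tendsto ρ (cocompact X) atTop := by
  obtain ⟨K, hK⟩ := exists_compactExhaustion_mapsTo_succ hg
  obtain ⟨ρ, hρ⟩ := exists_continuousMap_mem_Icc_find K
  refine ⟨1 + ρ, fun x => ?_, fun x => ?_, tendsto_atTop.mpr fun b => ?_⟩
  · exact add_pos_of_pos_of_nonneg one_pos ((Nat.cast_nonneg _).trans (hρ x).1)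
  · have hfind : (K.find (g x) : ℝ) ≤ K.find x + 1 :=
      mod_cast K.mem_iff_find_le.mp (hK _ (K.mem_find x))
    simp only [ContinuousMap.add_apply, ContinuousMap.one_apply]
    linarith [(hρ x).1, (hρ (g x)).2]
  · obtain ⟨n, hn⟩ := exists_nat_ge b
    filter_upwards [(K.isCompact n).compl_mem_cocompact] with x hx
    rw [mem_compl_iff, K.mem_iff_find_le, not_le] at hx
    have hx' : (n : ℝ) < K.find x := mod_cast hx
    simp only [ContinuousMap.add_apply, ContinuousMap.one_apply]
    linarith [(hρ x).1]

theorem monotone_birkhoffSum {α M : Type*} [AddCommMonoid M] [PartialOrder M]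
    [IsOrderedAddMonoid M] {g : α → α} {φ : α → M} (hφ : 0 ≤ φ) (x : α) :
    Monotone fun n => birkhoffSum g φ n x :=
  monotone_nat_of_le_succ fun n => by
    rw [birkhoffSum_succ]
    exact le_add_of_nonneg_right (hφ _)

theorem exists_le_birkhoffSum_inv {α : Type*} {g : α → α} {ρ : α → ℝ} {C m : ℝ} (hC : 0 ≤ C)
    (hm : 0 < m) (hρ : ∀ x, 0 < ρ x) (hρg : ∀ x, ρ (g x) ≤ ρ x + C) (B : ℝ) :
    ∃ N, ∀ x, ρ x ≤ m → B ≤ birkhoffSum g ρ⁻¹ N x := by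
  obtain ⟨N, hN⟩ :=
    (Real.tendsto_sum_range_one_div_nat_succ_atTop.eventually_ge_atTop (B * (m + C))).exists
  refine ⟨N, fun x hx => ?_⟩
  have hiter (i : ℕ) : ρ (g^[i] x) ≤ m + C * i := by
    induction i with
    | zero => simpa using hx
    | succ i ih =>
      rw [iterate_succ_apply']
      push_cast
      linarith [hρg (g^[i] x)]
  have hterm (i : ℕ) : 1 / ((i : ℝ) + 1) / (m + C) ≤ ρ⁻¹ (g^[i] x) := by
    rw [div_div, one_div, Pi.inv_apply]
    refine inv_anti₀ (hρ _) ((hiter i).trans ?_)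
    nlinarith [mul_nonneg hm.le i.cast_nonneg]
  calc B ≤ (∑ i ∈ Finset.range N, 1 / ((i : ℝ) + 1)) / (m + C) :=
        (le_div_iff₀ (by positivity)).mpr hN
    _ = ∑ i ∈ Finset.range N, 1 / ((i : ℝ) + 1) / (m + C) := Finset.sum_div _ _ _
    _ ≤ birkhoffSum g ρ⁻¹ N x := Finset.sum_le_sum fun i _ => hterm i

theorem exists_tendsto_zero_birkhoffSum_ge [LocallyCompactSpace X] [SigmaCompactSpace X]
    [T2Space X] {g : X → X} (hg : Continuous g) :
    ∃ ε : C(X, ℝ), (∀ x, 0 < ε x) ∧ Tendsto ε (cocompact X) (𝓝 0) ∧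
      ∀ (B : ℝ) (x₀ : X), ∃ N, ∀ᶠ x in 𝓝 x₀, B ≤ birkhoffSum g ε N x := by
  obtain ⟨ρ, hρ, hρg, hρ_top⟩ := exists_tendsto_atTop_apply_le_add_two hg
  refine ⟨⟨ρ⁻¹, ρ.continuous.inv₀ fun x => (hρ x).ne'⟩, fun x => inv_pos.mpr (hρ x),
    tendsto_inv_atTop_zero.comp hρ_top, fun B x₀ => ?_⟩
  obtain ⟨N, hN⟩ :=
    exists_le_birkhoffSum_inv zero_le_two (add_pos (hρ x₀) one_pos) hρ hρg B
  refine ⟨N, ?_⟩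
  filter_upwards [ρ.continuous.continuousAt.eventually_le_const (lt_add_one (ρ x₀))]
    with x hx using hN x hx

theorem continuous_iInf_of_eventually_ge {β : Type*} [ConditionallyCompleteLattice β]
    [TopologicalSpace β] [ContinuousInf β] {c : ℕ → X → β} (hc : ∀ k, Continuous (c k))
    (hlarge : ∀ x₀, ∃ N, ∀ᶠ x in 𝓝 x₀, ∀ k ≥ N, c 0 x ≤ c k x) :
    Continuous fun x => ⨅ k, c k x := by
  refine continuous_iff_continuousAt.mpr fun x₀ => ?_
  obtain ⟨N, hN⟩ := hlarge x₀
  have hne : (Finset.range (N + 1)).Nonempty := Finset.nonempty_range_add_one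
  refine (Continuous.finset_inf'_apply hne fun k _ => hc k).continuousAt.congr ?_
  filter_upwards [hN] with x hx
  have hlb (k : ℕ) : (Finset.range (N + 1)).inf' hne (c · x) ≤ c k x := by
    rcases lt_or_ge k N with hk | hk
    · exact Finset.inf'_le (c · x) (Finset.mem_range.mpr (by lia))
    · exact (Finset.inf'_le (c · x) (Finset.mem_range.mpr N.succ_pos)).trans (hx k hk)
  exact le_antisymm (le_ciInf hlb)
    (Finset.le_inf' _ _ fun k _ => ciInf_le ⟨_, forall_mem_range.mpr hlb⟩ k)

end SlowGrowth

section AsymptoticInvariance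

variable {X Y : Type*} [TopologicalSpace X]

/-- `h` is asymptotically invariant under `f` if `h x` and `h (f x)` become uniformly close as `x`
leaves every compact set. -/
def IsAsymptoticallyInvariant [UniformSpace Y] (f : X → X) (h : X → Y) : Prop :=
  Tendsto (fun x => (h x, h (f x))) (cocompact X) (𝓤 Y)

theorem isAsymptoticallyInvariant_pi {ι : Type*} {Z : ι → Type*} [∀ i, UniformSpace (Z i)]
    {f : X → X} {h : X → ∀ i, Z i} :
    IsAsymptoticallyInvariant f h ↔ ∀ i, IsAsymptoticallyInvariant f fun x => h x i := by
  simp only [IsAsymptoticallyInvariant, Pi.uniformity, tendsto_iInf, tendsto_comap_iff, comp_def]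

theorem isAsymptoticallyInvariant_of_hasCompactSupport [UniformSpace Y] [Zero Y] {h : X → Y}
    (hh : HasCompactSupport h) {f : X → X} (hf : Tendsto f (cocompact X) (cocompact X)) :
    IsAsymptoticallyInvariant f h :=
  (hh.is_zero_at_infty.prodMk_nhds (hh.is_zero_at_infty.comp hf)).mono_right
    (nhds_le_uniformity 0)

end AsymptoticInvariance

section Slowing

variable {X : Type*} {f g : X → X} {ε L : X → ℝ}

/-- The cost of following the backward map `g` for `k` steps from `x`, paying `ε` at each point
reached, `∑ i ∈ [1, k], ε (g^[i] x)`, and then paying `L` to stop. -/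
def stoppingCost (g : X → X) (ε L : X → ℝ) (k : ℕ) (x : X) : ℝ :=
  L (g^[k] x) + birkhoffSum g ε k (g x)

/-- The value function of the optimal stopping problem with costs `stoppingCost`. For
nonnegative `ε` and `L`, it is the largest function below `L` that grows by at most `ε` along the
inverse of `g`. -/
noncomputable def optimalStopping (g : X → X) (ε L : X → ℝ) (x : X) : ℝ :=
  ⨅ k, stoppingCost g ε L k x

theorem stoppingCost_zero (x : X) : stoppingCost g ε L 0 x = L x := by
  simp [stoppingCost]

theorem stoppingCost_succ_apply (hgf : LeftInverse g f) (k : ℕ) (x : X) :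
    stoppingCost g ε L (k + 1) (f x) = stoppingCost g ε L k x + ε x := by
  simp only [stoppingCost, iterate_succ_apply, hgf x, birkhoffSum_succ']
  ring

theorem birkhoffSum_le_stoppingCost (hL : 0 ≤ L) (k : ℕ) (x : X) :
    birkhoffSum g ε k (g x) ≤ stoppingCost g ε L k x :=
  le_add_of_nonneg_left (hL _)

theorem stoppingCost_nonneg (hε : 0 ≤ ε) (hL : 0 ≤ L) (k : ℕ) (x : X) :
    0 ≤ stoppingCost g ε L k x :=
  add_nonneg (hL _) (Finset.sum_nonneg fun _ _ => hε _)

theorem bddBelow_stoppingCost (hε : 0 ≤ ε) (hL : 0 ≤ L) (x : X) :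
    BddBelow (range fun k => stoppingCost g ε L k x) :=
  ⟨0, forall_mem_range.mpr fun k => stoppingCost_nonneg hε hL k x⟩

theorem optimalStopping_nonneg (hε : 0 ≤ ε) (hL : 0 ≤ L) (x : X) :
    0 ≤ optimalStopping g ε L x :=
  le_ciInf fun k => stoppingCost_nonneg hε hL k x

theorem optimalStopping_le (hε : 0 ≤ ε) (hL : 0 ≤ L) (x : X) : optimalStopping g ε L x ≤ L x :=
  (ciInf_le (bddBelow_stoppingCost hε hL x) 0).trans_eq (stoppingCost_zero x)

theorem optimalStopping_apply (hgf : LeftInverse g f) (hε : 0 ≤ ε) (hL : 0 ≤ L) (x : X) :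
    optimalStopping g ε L (f x) = min (L (f x)) (optimalStopping g ε L x + ε x) := by
  have hbdd := bddBelow_stoppingCost (g := g) hε hL
  refine le_antisymm (le_min (optimalStopping_le hε hL (f x)) ?_) (le_ciInf fun k => ?_)
  · refine sub_le_iff_le_add.mp (le_ciInf fun k => sub_le_iff_le_add.mpr ?_)
    exact (ciInf_le (hbdd (f x)) (k + 1)).trans_eq (stoppingCost_succ_apply hgf k x)
  · rcases k with - | k
    · exact (min_le_left _ _).trans_eq (stoppingCost_zero (f x)).symm
    · rw [stoppingCost_succ_apply hgf]
      exact (min_le_right _ _).trans (add_le_add_left (ciInf_le (hbdd x) k) _)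

theorem continuous_optimalStopping [TopologicalSpace X] (hg : Continuous g) (hεc : Continuous ε)
    (hLc : Continuous L) (hε : 0 ≤ ε) (hL : 0 ≤ L)
    (hlarge : ∀ x₀, ∃ N, ∀ᶠ x in 𝓝 x₀, L x ≤ birkhoffSum g ε N (g x)) :
    Continuous (optimalStopping g ε L) := by
  refine continuous_iInf_of_eventually_ge (fun k => ?_) fun x₀ => ?_
  · unfold stoppingCost birkhoffSum
    fun_prop
  · obtain ⟨N, hN⟩ := hlarge x₀
    refine ⟨N, hN.mono fun x hx k hk => ?_⟩
    calc stoppingCost g ε L 0 x = L x := stoppingCost_zero x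
      _ ≤ birkhoffSum g ε N (g x) := hx
      _ ≤ birkhoffSum g ε k (g x) := monotone_birkhoffSum hε _ hk
      _ ≤ stoppingCost g ε L k x := birkhoffSum_le_stoppingCost hL k x

theorem exists_lyapunov_isAsymptoticallyInvariant [TopologicalSpace X] [LocallyCompactSpace X]
    [SigmaCompactSpace X] [T2Space X] (hg : Continuous g) (hgf : LeftInverse g f) (L : C(X, I))
    (hLf : ∀ z, L z ≤ L (f z)) {x y : X} (hy : L y = 0) (hx : 0 < L (f x)) :
    ∃ M : C(X, I), (∀ z, M z ≤ M (f z)) ∧ M y < M (f x) ∧ IsAsymptoticallyInvariant f M := by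
  obtain ⟨ε, hε, hε_zero, hε_sum⟩ := exists_tendsto_zero_birkhoffSum_ge hg
  have hε0 : 0 ≤ (ε : X → ℝ) := fun z => (hε z).le
  let L' : X → ℝ := fun z => L z
  have hL0 : 0 ≤ L' := fun z => (L z).2.1
  let M := optimalStopping g ε L'
  have hM_apply (z : X) : M (f z) = min (L' (f z)) (M z + ε z) :=
    optimalStopping_apply hgf hε0 hL0 z
  have hM0 (z : X) : 0 ≤ M z := optimalStopping_nonneg hε0 hL0 z
  have hML (z : X) : M z ≤ L' z := optimalStopping_le hε0 hL0 z
  have hM_mono (z : X) : M z ≤ M (f z) :=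
    (le_min ((hML z).trans (hLf z)) (le_add_of_nonneg_right (hε z).le)).trans_eq (hM_apply z).symm
  have hMc : Continuous M := by
    refine continuous_optimalStopping hg ε.continuous (by fun_prop) hε0 hL0 fun x₀ => ?_
    obtain ⟨N, hN⟩ := hε_sum 1 (g x₀)
    exact ⟨N, (hg.continuousAt.eventually hN).mono fun z hz => (L z).2.2.trans hz⟩
  refine ⟨⟨fun z => ⟨M z, hM0 z, (hML z).trans (L z).2.2⟩, hMc.subtype_mk _⟩, hM_mono, ?_, ?_⟩
  · calc M y ≤ L' y := hML y
      _ = 0 := congrArg Subtype.val hy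
      _ < min (L' (f x)) (M x + ε x) := lt_min hx (add_pos_of_nonneg_of_pos (hM0 x) (hε x))
      _ = M (f x) := (hM_apply x).symm
  · refine tendsto_uniformity_iff_dist_tendsto_zero.mpr
      (squeeze_zero (fun _ => dist_nonneg) (fun z => ?_) hε_zero)
    change dist (M z) (M (f z)) ≤ ε z
    rw [dist_comm, Real.dist_eq, abs_of_nonneg (sub_nonneg.mpr (hM_mono z)), sub_le_iff_le_add']
    exact (hM_apply z).trans_le (min_le_right _ _)

end Slowing

section StopExtension

variable {X Y : Type*} {j : X → Y} {f g : X → X}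

/-- The extension of `f` along the injection `j` that fixes every point outside `range j`. -/
noncomputable def stopExtension (j : X → Y) (f : X → X) : Y → Y :=
  extend j (j ∘ f) id

theorem stopExtension_apply (hj : Injective j) (f : X → X) (x : X) :
    stopExtension j f (j x) = j (f x) :=
  hj.extend_apply _ _ x

theorem stopExtension_of_notMem_range (f : X → X) {z : Y} (hz : z ∉ range j) :
    stopExtension j f z = z :=
  extend_apply' _ _ z hz

theorem apply_le_apply_stopExtension {α : Type*} [Preorder α] (hj : Injective j) {L : Y → α}
    (hL : ∀ x, L (j x) ≤ L (j (f x))) (z : Y) : L z ≤ L (stopExtension j f z) := by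
  by_cases hz : z ∈ range j
  · obtain ⟨x, rfl⟩ := hz
    rw [stopExtension_apply hj]
    exact hL x
  · rw [stopExtension_of_notMem_range f hz]

theorem leftInverse_stopExtension (hj : Injective j) (hgf : LeftInverse g f) :
    LeftInverse (stopExtension j g) (stopExtension j f) := by
  intro z
  by_cases hz : z ∈ range j
  · obtain ⟨x, rfl⟩ := hz
    rw [stopExtension_apply hj, stopExtension_apply hj, hgf x]
  · rw [stopExtension_of_notMem_range f hz, stopExtension_of_notMem_range g hz]

variable [TopologicalSpace X]

theorem comap_nhds_le_cocompact [TopologicalSpace Y] [T2Space Y] (hj : Continuous j) {z : Y}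
    (hz : z ∉ range j) : comap j (𝓝 z) ≤ cocompact X := by
  refine (hasBasis_cocompact.ge_iff).mpr fun K hK => ?_
  refine ⟨(j '' K)ᶜ, (hK.image hj).isClosed.isOpen_compl.mem_nhds fun h =>
    hz (image_subset_range j K h), ?_⟩
  exact fun x hx hxK => hx (mem_image_of_mem j hxK)

theorem continuous_stopExtension [UniformSpace Y] [T2Space Y] (hj : IsOpenEmbedding j)
    (hf : Continuous f) (hjf : IsAsymptoticallyInvariant f j) :
    Continuous (stopExtension j f) := by
  have hcomp : stopExtension j f ∘ j = j ∘ f := funext (stopExtension_apply hj.injective f)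
  refine continuous_iff_continuousAt.mpr fun z => ?_
  by_cases hz : z ∈ range j
  · obtain ⟨x, rfl⟩ := hz
    rw [← hj.continuousAt_iff, hcomp]
    exact (hj.continuous.comp hf).continuousAt
  rw [ContinuousAt, stopExtension_of_notMem_range f hz]
  refine Tendsto.mono_left (tendsto_sup.mpr ⟨?_, ?_⟩)
    (nhds_eq_nhdsWithin_sup_nhdsWithin z (union_compl_self (range j)).symm).le
  · rw [nhdsWithin, ← map_comap, tendsto_map'_iff, hcomp]
    exact tendsto_comap.congr_uniformity (hjf.mono_left (comap_nhds_le_cocompact hj.continuous hz))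
  · refine (tendsto_id.mono_left nhdsWithin_le_nhds).congr' ?_
    filter_upwards [self_mem_nhdsWithin] with w hw
      using (stopExtension_of_notMem_range f hw).symm

theorem isHomeomorph_stopExtension [UniformSpace Y] [T2Space Y] [CompactSpace Y]
    (hj : IsOpenEmbedding j) (hf : IsHomeomorph f) (hjf : IsAsymptoticallyInvariant f j) :
    IsHomeomorph (stopExtension j f) := by
  obtain ⟨g, hgf, hfg⟩ := bijective_iff_has_inverse.mp hf.bijective
  exact isHomeomorph_iff_continuous_bijective.mpr
    ⟨continuous_stopExtension hj hf.continuous hjf, bijective_iff_has_inverse.mpr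
      ⟨stopExtension j g, leftInverse_stopExtension hj.injective hgf,
        leftInverse_stopExtension hj.injective hfg⟩⟩

end StopExtension

section EvalClosure

variable {X Y : Type*} [TopologicalSpace X]

theorem isOpen_range_of_denseRange [LocallyCompactSpace X] [TopologicalSpace Y] [T2Space Y]
    {j : X → Y} (hj : IsEmbedding j) (hd : DenseRange j) : IsOpen (range j) := by
  refine isOpen_iff_mem_nhds.mpr (forall_mem_range.mpr fun x => ?_)
  obtain ⟨K, hK, hxK⟩ := exists_compact_mem_nhds x
  obtain ⟨U, hU, hUK⟩ := hj.isInducing.nhds_eq_comap x ▸ hxK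
  obtain ⟨V, hVU, hV, hxV⟩ := mem_nhds_iff.mp hU
  refine mem_of_superset (hV.mem_nhds hxV) ?_
  calc V ⊆ closure (j '' (j ⁻¹' V)) := hd.subset_closure_image_preimage_of_isOpen hV
    _ ⊆ j '' K := closure_minimal (image_mono ((preimage_mono hVU).trans hUK))
        (hK.image hj.continuous).isClosed
    _ ⊆ range j := image_subset_range j K

/-- The evaluation map from `X` to the cube indexed by the family `S`. -/
def evalMap (S : Set C(X, I)) (x : X) (h : S) : I :=
  h.1 x

theorem continuous_evalMap (S : Set C(X, I)) : Continuous (evalMap S) :=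
  continuous_pi fun h => h.1.continuous

theorem isEmbedding_evalMap [T0Space X] {S : Set C(X, I)}
    (hS : IsTopologicalBasis ((fun h : C(X, I) => support h) '' S)) : IsEmbedding (evalMap S) := by
  refine IsInducing.isEmbedding ⟨le_antisymm (continuous_evalMap S).le_induced ?_⟩
  refine (le_generateFrom_iff_subset_isOpen.mpr ?_).trans_eq hS.eq_generateFrom.symm
  rintro - ⟨h, hh, rfl⟩
  exact isOpen_induced (t := inferInstance) (isOpen_ne.preimage (continuous_apply (⟨h, hh⟩ : S)))

/-- The compactification determined by the family `S`, if the functions in `S` induce the topology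
of `X`. -/
abbrev EvalClosure (S : Set C(X, I)) :=
  closure (range (evalMap S))

namespace EvalClosure

variable (S : Set C(X, I))

/-- The canonical map of `X` into its compactification. -/
def mk (x : X) : EvalClosure S :=
  ⟨evalMap S x, subset_closure (mem_range_self x)⟩

instance : CompactSpace (EvalClosure S) :=
  isCompact_iff_compactSpace.mp isClosed_closure.isCompact

theorem denseRange_mk : DenseRange (mk S) := by
  refine Subtype.dense_iff.mpr ?_
  rw [← range_comp]
  exact Subset.rfl

variable {S}

theorem isOpenEmbedding_mk [LocallyCompactSpace X] [T0Space X]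
    (hS : IsTopologicalBasis ((fun h : C(X, I) => support h) '' S)) : IsOpenEmbedding (mk S) := by
  have hemb : IsEmbedding (mk S) := (isEmbedding_evalMap hS).codRestrict _ _
  exact ⟨hemb, isOpen_range_of_denseRange hemb (denseRange_mk S)⟩

theorem isAsymptoticallyInvariant_mk {f : X → X} (hS : ∀ h ∈ S, IsAsymptoticallyInvariant f h) :
    IsAsymptoticallyInvariant f (mk S) := by
  rw [IsAsymptoticallyInvariant, uniformity_subtype, tendsto_comap_iff]
  exact isAsymptoticallyInvariant_pi.mpr fun h => hS h.1 h.2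

end EvalClosure

end EvalClosure

section StoppingFamily

variable {X : Type u} [TopologicalSpace X]

/-- A family of functions whose closure of evaluations `EvalClosure S` is a compactification to
which `f` extends by the identity without creating new generalized recurrence. -/
structure IsStoppingFamily (f : X → X) (S : Set C(X, I)) : Prop where
  isAsymptoticallyInvariant : ∀ h ∈ S, IsAsymptoticallyInvariant f h
  isTopologicalBasis_support : IsTopologicalBasis ((fun h : C(X, I) => support h) '' S)
  exists_lyapunov : ∀ x y, (x, y) ∉ gRel {p : X × X | p.2 = f p.1} →
    ∃ L ∈ S, (∀ z, L z ≤ L (f z)) ∧ L y < L (f x)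

theorem isTopologicalBasis_support_isAsymptoticallyInvariant [LocallyCompactSpace X]
    [T2Space X] {f : X → X} (hf : Tendsto f (cocompact X) (cocompact X)) :
    IsTopologicalBasis
      ((fun h : C(X, I) => support h) '' {h | IsAsymptoticallyInvariant f h}) := by
  refine isTopologicalBasis_of_isOpen_of_nhds ?_ fun x U hx hU => ?_
  · rintro - ⟨h, -, rfl⟩
    exact isOpen_ne_fun h.continuous continuous_const
  obtain ⟨h, h1, h0, hc, hI⟩ := exists_continuous_one_zero_of_isCompact
    (isCompact_singleton (x := x)) hU.isClosed_compl
    (disjoint_compl_right_iff_subset.mpr (singleton_subset_iff.mpr hx))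
  let b : C(X, I) := ⟨fun z => ⟨h z, hI z⟩, h.continuous.subtype_mk _⟩
  have hb (z : X) : b z = 0 ↔ h z = 0 := Subtype.ext_iff
  have hbc : HasCompactSupport b := hc.mono fun z hz => mt (hb z).mpr hz
  refine ⟨support b, ⟨b, isAsymptoticallyInvariant_of_hasCompactSupport hbc hf, rfl⟩, ?_, ?_⟩
  · rw [mem_support, ne_eq, hb, h1 rfl]
    exact one_ne_zero
  · exact fun z hz => not_not.mp fun hzU => hz ((hb z).mpr (h0 hzU))

theorem isStoppingFamily_setOf_isAsymptoticallyInvariant [LocallyCompactSpace X]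
    [SigmaCompactSpace X] [T2Space X] {f : X → X} (hf : IsHomeomorph f) :
    IsStoppingFamily f {h : C(X, I) | IsAsymptoticallyInvariant f h} where
  isAsymptoticallyInvariant _ hh := hh
  isTopologicalBasis_support :=
    isTopologicalBasis_support_isAsymptoticallyInvariant hf.isClosedEmbedding.tendsto_cocompact
  exists_lyapunov x y hxy := by
    obtain ⟨L, hLf, hy, hx⟩ := exists_lyapunov_of_notMem_gRel hxy
    obtain ⟨M, hMf, hlt, hM⟩ := exists_lyapunov_isAsymptoticallyInvariant
      (hf.homeomorph f).symm.continuous (hf.homeomorph f).symm_apply_apply L hLf hy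
      (hx ▸ zero_lt_one)
    exact ⟨M, hM, hMf, hlt⟩

theorem IsStoppingFamily.exists_countable [SecondCountableTopology X] {f : X → X}
    (hf : Continuous f) {S : Set C(X, I)} (hS : IsStoppingFamily f S) :
    ∃ T ⊆ S, T.Countable ∧ IsStoppingFamily f T := by
  obtain ⟨B, hBS, hBc, hB⟩ := hS.isTopologicalBasis_support.exists_countable
  obtain ⟨T₁, hT₁S, hT₁inj, rfl⟩ := SurjOn.exists_subset_injOn_image_eq hBS
  have hT₁c : T₁.Countable := countable_of_injective_of_countable_image hT₁inj hBc
  obtain ⟨T₂, hT₂, hT₂c, hT₂U⟩ := isOpen_biUnion_countable {L ∈ S | ∀ z, L z ≤ L (f z)}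
    (fun L => {p : X × X | L p.2 < L (f p.1)}) fun L _ => isOpen_lt (by fun_prop) (by fun_prop)
  have hsub : T₁ ∪ T₂ ⊆ S := union_subset hT₁S fun L hL => (hT₂ hL).1
  refine ⟨T₁ ∪ T₂, hsub, hT₁c.union hT₂c, fun h hh => hS.isAsymptoticallyInvariant h (hsub hh),
    hB.of_isOpen_of_subset ?_ (image_mono subset_union_left), fun x y hxy => ?_⟩
  · exact fun s hs => hS.isTopologicalBasis_support.isOpen (image_mono hsub hs)
  · obtain ⟨L, hL, hLf, hlt⟩ := hS.exists_lyapunov x y hxy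
    have hmem : (x, y) ∈ ⋃ L ∈ T₂, {p : X × X | L p.2 < L (f p.1)} :=
      hT₂U ▸ mem_biUnion (show L ∈ {L ∈ S | ∀ z, L z ≤ L (f z)} from ⟨hL, hLf⟩) hlt
    obtain ⟨M, hM, hMlt⟩ := mem_iUnion₂.mp hmem
    exact ⟨M, Or.inr hM, (hT₂ hM).2, hMlt⟩

theorem IsStoppingFamily.isStoppedCascadeCompactification [LocallyCompactSpace X] [T2Space X]
    {f : X → X} (hf : IsHomeomorph f) {S : Set C(X, I)} (hS : IsStoppingFamily f S) :
    IsStoppedCascadeCompactification f (EvalClosure S) (EvalClosure.mk S)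
      (stopExtension (EvalClosure.mk S) f) := by
  have hj := EvalClosure.isOpenEmbedding_mk hS.isTopologicalBasis_support
  have hfh := isHomeomorph_stopExtension hj hf
    (EvalClosure.isAsymptoticallyInvariant_mk hS.isAsymptoticallyInvariant)
  refine ⟨inferInstance, inferInstance, hj.isEmbedding, hj.isOpen_range,
    EvalClosure.denseRange_mk S, hfh, stopExtension_apply hj.injective f,
    fun z => stopExtension_of_notMem_range f, fun x y => ⟨fun hxy => ?_, fun hxy => ?_⟩⟩
  · by_contra hxy'
    obtain ⟨L, hL, hLf, hlt⟩ := hS.exists_lyapunov x y hxy'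
    have hle := le_of_mem_gRel_graph hfh.continuous
      ((continuous_apply (⟨L, hL⟩ : S)).comp continuous_subtype_val)
      (apply_le_apply_stopExtension hj.injective hLf) hxy
    rw [stopExtension_apply hj.injective] at hle
    exact hlt.not_ge hle
  · refine gRel_subset_preimage_gRel hj.continuous (fun p hp => ?_) hxy
    exact (congrArg _ hp).trans (stopExtension_apply hj.injective f p.1).symm

end StoppingFamily

/-- Every homeomorphism `f` of a locally compact, σ-compact Hausdorff
space `X` admits a proper compactification by a homeomorphism which fixes every point
at infinity and is dynamic; if `X` is metrizable, the compactification can be chosen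
metrizable. -/
theorem exists_stopped_cascade_compactification
    {X : Type u} [TopologicalSpace X] [LocallyCompactSpace X]
    [SigmaCompactSpace X] [T2Space X]
    (f : X → X) (hf : IsHomeomorph f) :
    (∃ (Xh : Type u) (t : TopologicalSpace Xh) (j : X → Xh) (fh : Xh → Xh),
      @IsStoppedCascadeCompactification X _ f Xh t j fh) ∧
    (TopologicalSpace.MetrizableSpace X →
      ∃ (Xh : Type u) (t : TopologicalSpace Xh) (j : X → Xh) (fh : Xh → Xh),
        @IsStoppedCascadeCompactification X _ f Xh t j fh ∧
          @TopologicalSpace.MetrizableSpace Xh t) := by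
  have hS := isStoppingFamily_setOf_isAsymptoticallyInvariant hf
  refine ⟨⟨_, _, _, _, hS.isStoppedCascadeCompactification hf⟩, fun _ => ?_⟩
  let := metrizableSpaceMetric X
  have := EMetric.secondCountable_of_sigmaCompact X
  obtain ⟨T, -, hTc, hT⟩ := hS.exists_countable hf.continuous
  have := hTc.to_subtype
  exact ⟨_, _, _, _, hT.isStoppedCascadeCompactification hf, inferInstance⟩
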